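/- Let p be a prime and G a finite p-group of order p^n with |G'| = p^2 and |M(G)| = p^{(n-1)(n-2)/2 - 1}. Then the center Z(G) is elementary abelian (has exponent p). -/

import Mathlib

/-- The kernel of the canonical free presentation `FreeGroup G → G`. -/
def presentationKernel (G : Type u) [Group G] : Subgroup (FreeGroup G) :=
  (FreeGroup.lift (id : G → G)).ker

/-- The Schur multiplier `M(G) = H₂(G, ℤ)` (second integral group homology) of a
group `G`, realised via Hopf's integral formula `H₂(G, ℤ) ≅ (R ⊓ [F, F]) / [F, R]`,
where `F = FreeGroup G` is the canonical free group surjecting onto `G` with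
kernel `R`. -/
def SchurMultiplier (G : Type u) [Group G] : Type u :=
  ↥(presentationKernel G ⊓ commutator (FreeGroup G)) ⧸
    (⁅(⊤ : Subgroup (FreeGroup G)), presentationKernel G⁆.subgroupOf
      (presentationKernel G ⊓ commutator (FreeGroup G)))

/-- A finite `p`-group `H` is extraspecial if its center, derived subgroup and
Frattini subgroup coincide and have order `p`. -/
def IsExtraspecial (p : ℕ) (H : Type*) [Group H] : Prop :=
  Subgroup.center H = commutator H ∧ Subgroup.center H = frattini H ∧
    Nat.card (Subgroup.center H) = p

/-!
Let `E = F / [F, R]`, a central extension of `G = F / R` with `|E'| = |M(G)| |G'|`. If `x ∈ E` is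
central modulo `Z(E)`, then `e ↦ ⁅e, x⁆` is a homomorphism onto a central subgroup `D ≤ E'`, and
both `|D|` and `|E / D : Z(E / D)|` divide `|E : ⟨Z(E), x⟩|`. Taking for `x` successive central
elements modulo the center yields Wiegold's bound: `|E : Z(E)| ∣ p ^ k` implies
`|E'| ∣ p ^ (k choose 2)`. A lift `x` of a `z ∈ Z(G)` with `z ^ p ≠ 1` has
`|E : ⟨Z(E), x⟩| ∣ p ^ (n - 2)`, so it gives `|M(G)| |G'| ∣ p ^ ((n - 1) choose 2)`, one
factor of `p` less than assumed.
-/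

open Subgroup

open scoped commutatorElement

theorem dvd_prime_pow_sub_of_mul_dvd {p a b n j : ℕ} (hp : p.Prime) (hab : a * b ∣ p ^ n)
    (hb : ¬b ∣ p ^ j) : a ∣ p ^ (n - (j + 1)) := by
  obtain ⟨k, -, rfl⟩ := (Nat.dvd_prime_pow hp).1 (dvd_of_mul_left_dvd hab)
  obtain ⟨i, -, rfl⟩ := (Nat.dvd_prime_pow hp).1 (dvd_of_mul_right_dvd hab)
  rw [← pow_add, Nat.pow_dvd_pow_iff_le_right hp.one_lt] at hab
  rw [Nat.pow_dvd_pow_iff_le_right hp.one_lt] at hb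
  exact pow_dvd_pow p (by omega)

section CommutatorHom

variable {E G : Type*} [Group E] [Group G]

theorem relIndex_ker_commutator {f : E →* G} (hf : Function.Surjective f) :
    f.ker.relIndex (commutator E) = Nat.card (commutator G) := by
  rw [relIndex_ker, map_commutator_eq, f.range_eq_top_of_surjective hf, commutator_def]

theorem commutator_mem_center_of_map_mem_center {f : E →* G} (hf : f.ker ≤ center E) {x : E}
    (hx : f x ∈ center G) (e : E) : ⁅e, x⁆ ∈ center E := by
  apply hf
  rw [MonoidHom.mem_ker, map_commutatorElement, commutatorElement_eq_one_iff_mul_comm]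
  exact mem_center_iff.1 hx (f e)

theorem index_center_sup_zpowers_dvd_index_zpowers_map {f : E →* G}
    (hf : Function.Surjective f) (hker : f.ker ≤ center E) (x : E) :
    (center E ⊔ zpowers x).index ∣ (zpowers (f x)).index := by
  rw [← index_comap_of_surjective _ hf, ← MonoidHom.map_zpowers, comap_map_eq]
  exact index_dvd_of_le (sup_le le_sup_right (hker.trans le_sup_left))

/-- The homomorphism `e ↦ ⁅e, x⁆` attached to an element `x` of the second center of `E`, that is,
an element that is central modulo `center E`. -/
def commutatorHom (x : E) (hx : ∀ e : E, ⁅e, x⁆ ∈ center E) : E →* E :=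
  MonoidHom.mk' (fun e => ⁅e, x⁆) fun a b => by
    rw [commutatorElement_mul_left_eq_conj_mul, mem_center_iff.1 (hx b) a, mul_inv_cancel_right,
      mem_center_iff.1 (hx a)]

variable {x : E} (hx : ∀ e : E, ⁅e, x⁆ ∈ center E)

theorem commutatorHom_range_le_center : (commutatorHom x hx).range ≤ center E := by
  rintro _ ⟨e, rfl⟩
  exact hx e

theorem commutatorHom_range_le_commutator : (commutatorHom x hx).range ≤ commutator E := by
  rintro _ ⟨e, rfl⟩
  exact commutator_mem_commutator (mem_top e) (mem_top x)

instance commutatorHom_range_normal : (commutatorHom x hx).range.Normal where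
  conj_mem d hd g := by
    rwa [mem_center_iff.1 (commutatorHom_range_le_center hx hd) g, mul_inv_cancel_right]

theorem card_commutatorHom_range_dvd :
    Nat.card (commutatorHom x hx).range ∣ (center E ⊔ zpowers x).index := by
  rw [← index_ker]
  refine index_dvd_of_le (sup_le (fun c hc => ?_) ?_)
  · exact commutatorElement_eq_one_iff_mul_comm.2 (mem_center_iff.1 hc x).symm
  · exact zpowers_le.2 (commutatorElement_self x)

theorem index_center_quotient_commutatorHom_range_dvd :
    (center (E ⧸ (commutatorHom x hx).range)).index ∣ (center E ⊔ zpowers x).index := by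
  let π := QuotientGroup.mk' (commutatorHom x hx).range
  have hπ : Function.Surjective π := QuotientGroup.mk'_surjective _
  have mem_of_forall {c : E} (hc : ∀ e : E, π ⁅e, c⁆ = 1) : c ∈ (center _).comap π := by
    refine mem_comap.2 (mem_center_iff.2 (hπ.forall.2 fun e => ?_))
    rw [← commutatorElement_eq_one_iff_mul_comm, ← map_commutatorElement, hc]
  rw [← index_comap_of_surjective _ hπ]
  refine index_dvd_of_le (sup_le (fun c hc => mem_of_forall fun e => ?_) ?_)
  · rw [commutatorElement_eq_one_iff_mul_comm.2 (mem_center_iff.1 hc e), map_one]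
  · exact zpowers_le.2 (mem_of_forall fun e => (QuotientGroup.eq_one_iff _).2 ⟨e, rfl⟩)

theorem card_commutator_eq_card_range_mul_card_commutator_quotient :
    Nat.card (commutator E) = Nat.card (commutatorHom x hx).range *
      Nat.card (commutator (E ⧸ (commutatorHom x hx).range)) := by
  rw [← relIndex_ker_commutator (QuotientGroup.mk'_surjective (commutatorHom x hx).range),
    QuotientGroup.ker_mk', ← relIndex_bot_left, ← relIndex_bot_left,
    relIndex_mul_relIndex _ _ _ bot_le (commutatorHom_range_le_commutator hx)]

end CommutatorHom

section Wiegold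

variable {p : ℕ}

theorem exists_notMem_center_forall_commutator_mem_center {E : Type*} [Group E]
    [(center E).FiniteIndex] (hE : IsPGroup p (E ⧸ center E)) (hp : p.Prime)
    (hc : center E ≠ ⊤) : ∃ x ∉ center E, ∀ e : E, ⁅e, x⁆ ∈ center E := by
  have : Fact p.Prime := ⟨hp⟩
  have : Nontrivial (E ⧸ center E) := QuotientGroup.nontrivial_iff.2 hc
  obtain ⟨z, hz, hz1⟩ := SetLike.exists_of_lt hE.bot_lt_center
  obtain ⟨x, rfl⟩ := QuotientGroup.mk'_surjective _ z
  refine ⟨x, fun hx => hz1 (mem_bot.2 ((QuotientGroup.eq_one_iff x).2 hx)), ?_⟩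
  exact commutator_mem_center_of_map_mem_center (QuotientGroup.ker_mk' (center E)).le hz

theorem card_commutator_dvd_of_index_center_dvd (hp : p.Prime) {k : ℕ} {E : Type*} [Group E]
    (hE : (center E).index ∣ p ^ k) : Nat.card (commutator E) ∣ p ^ k.choose 2 := by
  induction k generalizing E with
  | zero =>
    have hc : center E = ⊤ := index_eq_one.1 (Nat.dvd_one.1 hE)
    simp [(commutator_eq_bot_iff_center_eq_top E).2 hc]
  | succ k ih =>
    by_cases hc : center E = ⊤
    · simp [(commutator_eq_bot_iff_center_eq_top E).2 hc]
    have : (center E).FiniteIndex := ⟨ne_zero_of_dvd_ne_zero (pow_ne_zero _ hp.ne_zero) hE⟩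
    obtain ⟨m, -, hm⟩ := (Nat.dvd_prime_pow hp).1 hE
    obtain ⟨x, hxc, hx⟩ :=
      exists_notMem_center_forall_commutator_mem_center (IsPGroup.of_card hm) hp hc
    have hindex : (center E ⊔ zpowers x).index ∣ p ^ k := by
      refine dvd_prime_pow_sub_of_mul_dvd (n := k + 1) (j := 0) hp
        (b := (center E).relIndex (center E ⊔ zpowers x)) ?_ ?_
      · rwa [mul_comm, relIndex_mul_index le_sup_left]
      · rw [pow_zero, Nat.dvd_one, relIndex_eq_one]
        exact fun hle => hxc (hle (mem_sup_right (mem_zpowers x)))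
    rw [card_commutator_eq_card_range_mul_card_commutator_quotient hx, Nat.choose_succ_succ,
      Nat.choose_one_right, pow_add]
    exact mul_dvd_mul ((card_commutatorHom_range_dvd hx).trans hindex)
      (ih ((index_center_quotient_commutatorHom_range_dvd hx).trans hindex))

theorem card_commutator_dvd_of_index_center_sup_zpowers_dvd (hp : p.Prime) {k : ℕ} {E : Type*}
    [Group E] {x : E} (hx : ∀ e : E, ⁅e, x⁆ ∈ center E)
    (hindex : (center E ⊔ zpowers x).index ∣ p ^ k) :
    Nat.card (commutator E) ∣ p ^ (k + 1).choose 2 := by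
  rw [card_commutator_eq_card_range_mul_card_commutator_quotient hx, Nat.choose_succ_succ,
    Nat.choose_one_right, pow_add]
  exact mul_dvd_mul ((card_commutatorHom_range_dvd hx).trans hindex)
    (card_commutator_dvd_of_index_center_dvd hp
      ((index_center_quotient_commutatorHom_range_dvd hx).trans hindex))

end Wiegold

section FreeCentralExtension

variable (G : Type*) [Group G]

instance presentationKernel_normal : (presentationKernel G).Normal :=
  MonoidHom.normal_ker _

/-- The quotient `F / [F, R]` of the free presentation `F / R` of `G`, the largest quotient of `F`
in which the image of `R` is central. -/
abbrev FreeCentralExtension : Type _ :=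
  FreeGroup G ⧸ ⁅(⊤ : Subgroup (FreeGroup G)), presentationKernel G⁆

namespace FreeCentralExtension

/-- The projection `F / [F, R] → F / R = G`, whose kernel `R / [F, R]` is central. -/
def toGroup : FreeCentralExtension G →* G :=
  QuotientGroup.lift _ (FreeGroup.lift id) (commutator_le_right ⊤ (presentationKernel G))

theorem toGroup_surjective : Function.Surjective (toGroup G) := fun g =>
  ⟨QuotientGroup.mk (FreeGroup.of g), FreeGroup.lift_apply_of⟩

theorem ker_toGroup_le_center : (toGroup G).ker ≤ center (FreeCentralExtension G) := by
  intro r hr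
  induction r using QuotientGroup.induction_on with | H r =>
  refine mem_center_iff.2 fun e => ?_
  induction e using QuotientGroup.induction_on with | H e =>
  rw [← commutatorElement_eq_one_iff_mul_comm]
  exact (QuotientGroup.eq_one_iff _).2 (commutator_mem_commutator (mem_top e) hr)

end FreeCentralExtension

theorem card_schurMultiplier_mul_card_commutator :
    Nat.card (SchurMultiplier G) * Nat.card (commutator G) =
      Nat.card (commutator (FreeCentralExtension G)) := by
  let F := FreeGroup G
  let R := presentationKernel G
  let C : Subgroup F := ⁅(⊤ : Subgroup F), R⁆
  have card_multiplier : Nat.card (SchurMultiplier G) = C.relIndex (R ⊓ commutator F) := rfl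
  have card_commutator : Nat.card (commutator G) = (R ⊓ commutator F).relIndex (commutator F) := by
    rw [inf_relIndex_right]
    exact (relIndex_ker_commutator fun g => ⟨FreeGroup.of g, FreeGroup.lift_apply_of⟩).symm
  have hC : C ≤ R ⊓ commutator F :=
    le_inf (commutator_le_right ⊤ R) (commutator_mono le_rfl le_top)
  rw [card_multiplier, card_commutator, relIndex_mul_relIndex _ _ _ hC inf_le_right,
    ← relIndex_ker_commutator (QuotientGroup.mk'_surjective C), QuotientGroup.ker_mk']

variable {G}

theorem card_schurMultiplier_mul_card_commutator_dvd {p k : ℕ} (hp : p.Prime) {z : G}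
    (hz : z ∈ center G) (hindex : (zpowers z).index ∣ p ^ k) :
    Nat.card (SchurMultiplier G) * Nat.card (commutator G) ∣ p ^ (k + 1).choose 2 := by
  obtain ⟨x, rfl⟩ := FreeCentralExtension.toGroup_surjective G z
  have hker := FreeCentralExtension.ker_toGroup_le_center G
  rw [card_schurMultiplier_mul_card_commutator]
  exact card_commutator_dvd_of_index_center_sup_zpowers_dvd hp
    (commutator_mem_center_of_map_mem_center hker hz)
    ((index_center_sup_zpowers_dvd_index_zpowers_map
      (FreeCentralExtension.toGroup_surjective G) hker x).trans hindex)

end FreeCentralExtension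

theorem index_zpowers_dvd_of_pow_ne_one {p n : ℕ} (hp : p.Prime) {G : Type*} [Group G]
    (hG : Nat.card G = p ^ n) {z : G} (hz : z ^ p ≠ 1) : (zpowers z).index ∣ p ^ (n - 2) := by
  refine dvd_prime_pow_sub_of_mul_dvd (j := 1) (b := orderOf z) hp ?_ ?_
  · rw [← Nat.card_zpowers, index_mul_card, hG]
  · rwa [pow_one, orderOf_dvd_iff_pow_eq_one]

theorem center_elementary_of_s_eq_two_general {p n : ℕ} (hp : p.Prime)
    {G : Type*} [Group G] (hG : Nat.card G = p ^ n)
    (hM : p ^ ((n - 1) * (n - 2) / 2) < Nat.card (SchurMultiplier G) * Nat.card (commutator G)) :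
    ∀ z ∈ center G, z ^ p = 1 := by
  intro z hz
  by_contra hzp
  have hdvd := card_schurMultiplier_mul_card_commutator_dvd hp hz
    (index_zpowers_dvd_of_pow_ne_one hp hG hzp)
  have hexp : (n - 2 + 1).choose 2 = (n - 1) * (n - 2) / 2 := by
    rcases n with _ | _ | n <;> simp [Nat.choose_two_right]
  rw [hexp] at hdvd
  exact hM.not_ge (Nat.le_of_dvd (pow_pos hp.pos _) hdvd)

/-- **Lemma 3, second case.** If `G` is a `p`-group of order `p^n` with `|G'| = p^2` and
`|M(G)| = p^((n-1)(n-2)/2 - 1)`, then the center of `G` is elementary abelian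
(has exponent `p`). -/
theorem center_elementary_of_s_eq_two {p n : ℕ} (hp : p.Prime)
    {G : Type*} [Group G] (hG : Nat.card G = p ^ n)
    (hG' : Nat.card (commutator G) = p ^ 2)
    (hM : Nat.card (SchurMultiplier G) = p ^ ((n - 1) * (n - 2) / 2 - 1)) :
    ∀ z ∈ Subgroup.center G, z ^ p = 1 := by
  refine center_elementary_of_s_eq_two_general hp hG ?_
  rw [hM, hG', ← pow_add]
  exact Nat.pow_lt_pow_right hp.one_lt (by omega)
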